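/- arXiv:2410.07942 — 3 statements merged into one kernel-verified Lean document; each statement's English description precedes it below -/
import Mathlib

section
/- Let F be a field in which the squaring map is not surjective. Let M be a linear subspace of Mat_n(F) in which every matrix is triangularizable over F, and suppose M is spanned by matrices of rank 1 and trace 0. Then dim M ≤ n²/2. -/
/-- A square matrix is triangularizable over the ground field when it is
similar over that field to an upper triangular matrix. -/
def Matrix.Triangularizable {n : ℕ} {F : Type*} [Field F]
    (M : Matrix (Fin n) (Fin n) F) : Prop :=
  ∃ P : (Matrix (Fin n) (Fin n) F)ˣ,
    ((P : Matrix (Fin n) (Fin n) F) * M * ((P⁻¹ : (Matrix (Fin n) (Fin n) F)ˣ) :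
      Matrix (Fin n) (Fin n) F)).BlockTriangular id

/-!
Let `A` and `B` have rank at most `1` and trace `0`, and put `τ = tr (AB)`. Then `A² = B² = 0`,
`ABA = τA` and `BAB = τB`, so `T = A + tB` satisfies `T³ = tτT`. If `τ ≠ 0`, choose `t` so that
`tτ = c` is not a square. Then `X² - c` has no root, hence is coprime to the split polynomial
`charpoly T`, and `(T² - c)T = 0` forces `T = 0`, contradicting `tr (AT) = c ≠ 0`.
So `τ = 0` for any two of the spanning matrices, and their span is totally isotropic for the
trace form.
-/

open Polynomial Matrix

theorem charpoly_splits_of_triangularizable {F : Type*} [Field F] {n : ℕ}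
    {A : Matrix (Fin n) (Fin n) F} (hA : A.Triangularizable) : A.charpoly.Splits := by
  obtain ⟨P, hP⟩ := hA
  rw [← charpoly_units_conj P A, ← coe_units_inv, charpoly_of_isUpperTriangular _ hP]
  exact Splits.prod fun i _ => Splits.X_sub_C _

section Polynomial

variable {F : Type*} [Field F]

theorem isCoprime_of_splits_of_not_isRoot {p q : F[X]} (hp : p.Splits) (hp₀ : p ≠ 0)
    (h : ∀ x, p.IsRoot x → ¬ q.IsRoot x) : IsCoprime p q := by
  refine EuclideanDomain.isCoprime_of_dvd (fun h₀ => hp₀ h₀.1) fun r hr _ hrp hrq => ?_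
  have hdeg : r.degree ≠ 0 := fun h₀ => hr (isUnit_iff_degree_eq_zero.2 h₀)
  obtain ⟨x, hx⟩ := (hp.of_dvd hp₀ hrp).exists_eval_eq_zero hdeg
  exact h x (IsRoot.dvd hx hrp) (IsRoot.dvd hx hrq)

theorem eq_zero_of_pow_three_eq_smul {R : Type*} [Ring R] [Algebra F R] {a : R} {p : F[X]}
    (hp : p.Splits) (hp₀ : p ≠ 0) (hpa : aeval a p = 0) {c : F} (hc : ¬ IsSquare c)
    (ha : a ^ 3 = c • a) : a = 0 := by
  have hroot (x : F) : ¬ (X ^ 2 - C c).IsRoot x := fun hx =>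
    hc ⟨x, by simpa [← sq, sub_eq_zero, eq_comm (a := c)] using hx⟩
  have hann : aeval a (X ^ 2 - C c) * a = 0 := by
    simp [sub_mul, ← pow_succ, ha, Algebra.smul_def]
  obtain ⟨f, g, hfg⟩ := isCoprime_of_splits_of_not_isRoot hp hp₀ fun x _ => hroot x
  calc a = aeval a (f * p + g * (X ^ 2 - C c)) * a := by rw [hfg, map_one, one_mul]
    _ = 0 := by rw [map_add, map_mul, map_mul, hpa, mul_zero, zero_add, mul_assoc, hann, mul_zero]

end Polynomial

theorem add_smul_pow_three {R A : Type*} [CommSemiring R] [Semiring A] [Algebra R A] {a b : A}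
    {τ : R} (haa : a * a = 0) (hbb : b * b = 0) (haba : a * b * a = τ • a)
    (hbab : b * a * b = τ • b) (t : R) : (a + t • b) ^ 3 = (t * τ) • (a + t • b) := by
  have hsq : (a + t • b) ^ 2 = t • (a * b + b * a) := by
    simp [sq, add_mul, mul_add, haa, hbb, add_comm]
  have hmul_left : (a * b + b * a) * a = τ • a := by
    rw [add_mul, haba, mul_assoc, haa, mul_zero, add_zero]
  have hmul_right : (a * b + b * a) * b = τ • b := by
    rw [add_mul, hbab, mul_assoc, hbb, mul_zero, zero_add]
  rw [pow_succ, hsq, smul_mul_assoc, mul_add, mul_smul_comm, hmul_left, hmul_right,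
    smul_comm t τ b, ← smul_add, smul_smul]

section RankOne

variable {F m n : Type*} [Field F] [Fintype n]

theorem exists_eq_vecMulVec_of_rank_le_one {A : Matrix m n F} (hA : A.rank ≤ 1) :
    ∃ u v, A = vecMulVec u v := by
  classical
  obtain ⟨u, hu⟩ := finrank_le_one_iff.1 hA
  choose v hv using fun j => hu ⟨A *ᵥ Pi.single j 1, Pi.single j 1, rfl⟩
  refine ⟨u, v, ext fun i j => ?_⟩
  have hcol : v j * (u : m → F) i = A i j := by
    simpa using congrFun (congrArg Subtype.val (hv j)) i
  rw [vecMulVec_apply, mul_comm, hcol]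

theorem mul_mul_self_of_rank_le_one [Fintype m] {A : Matrix m n F} (hA : A.rank ≤ 1)
    (B : Matrix n m F) : A * B * A = (A * B).trace • A := by
  obtain ⟨u, v, rfl⟩ := exists_eq_vecMulVec_of_rank_le_one hA
  rw [vecMulVec_mul, vecMulVec_mul_vecMulVec, trace_vecMulVec, vecMulVec_smul, dotProduct_comm]

theorem mul_self_eq_zero_of_rank_le_one_of_trace_eq_zero {A : Matrix n n F} (hA : A.rank ≤ 1)
    (htr : A.trace = 0) : A * A = 0 := by
  classical
  simpa [htr] using mul_mul_self_of_rank_le_one hA 1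

theorem trace_mul_eq_zero_of_splits_charpoly [DecidableEq n] {c : F} (hc : ¬ IsSquare c)
    {A B : Matrix n n F} (hA : A.rank ≤ 1) (hB : B.rank ≤ 1) (hAtr : A.trace = 0)
    (hBtr : B.trace = 0) (hsplits : ∀ t : F, (A + t • B).charpoly.Splits) :
    (A * B).trace = 0 := by
  by_contra hτ
  have hAA := mul_self_eq_zero_of_rank_le_one_of_trace_eq_zero hA hAtr
  have hBB := mul_self_eq_zero_of_rank_le_one_of_trace_eq_zero hB hBtr
  have hBAB : B * A * B = (A * B).trace • B :=
    trace_mul_comm A B ▸ mul_mul_self_of_rank_le_one hB A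
  set t := c / (A * B).trace
  have htτ : t * (A * B).trace = c := div_mul_cancel₀ c hτ
  have hcube : (A + t • B) ^ 3 = c • (A + t • B) :=
    htτ ▸ add_smul_pow_three hAA hBB (mul_mul_self_of_rank_le_one hA B) hBAB t
  have hzero : A + t • B = 0 :=
    eq_zero_of_pow_three_eq_smul (hsplits t) (charpoly_monic _).ne_zero
      (aeval_self_charpoly _) hc hcube
  have hc₀ : c = 0 := calc
    c = (A * (A + t • B)).trace := by simp [mul_add, hAA, htτ]
    _ = 0 := by rw [hzero, mul_zero, trace_zero]
  exact hc (hc₀ ▸ IsSquare.zero)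

end RankOne

theorem span_le_orthogonal_span {R V : Type*} [CommSemiring R] [AddCommMonoid V] [Module R V]
    {B : LinearMap.BilinForm R V} {s : Set V} (h : ∀ x ∈ s, ∀ y ∈ s, B x y = 0) :
    Submodule.span R s ≤ B.orthogonal (Submodule.span R s) := by
  intro y hy x hx
  induction hx, hy using Submodule.span_induction₂ with
  | mem_mem x y hx hy => exact h x hx y hy
  | _ => simp_all

theorem two_mul_finrank_le_of_le_orthogonal {K V : Type*} [Field K] [AddCommGroup V] [Module K V]
    [FiniteDimensional K V] {B : LinearMap.BilinForm K V} (hB : B.Nondegenerate)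
    {W : Submodule K V} (hW : W ≤ B.orthogonal W) :
    2 * Module.finrank K W ≤ Module.finrank K V := by
  have hle := Submodule.finrank_mono hW
  rw [LinearMap.BilinForm.finrank_orthogonal hB] at hle
  have := Submodule.finrank_le W
  lia

section TraceForm

variable (n R : Type*) [Fintype n] [CommSemiring R]

/-- The trace form `(A, B) ↦ tr (A * B)` on square matrices. It differs from
`Algebra.traceForm R (Matrix n n R)`, which uses the trace of left multiplication and is
therefore the multiple of this form by the size of the matrices. -/
def matrixTraceForm : LinearMap.BilinForm R (Matrix n n R) :=
  (LinearMap.mul R (Matrix n n R)).compr₂ (traceLinearMap n R R)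

variable {n R}

theorem matrixTraceForm_apply (A B : Matrix n n R) : matrixTraceForm n R A B = (A * B).trace :=
  rfl

theorem matrixTraceForm_nondegenerate : (matrixTraceForm n R).Nondegenerate := by
  constructor
  · exact fun A hA => ext_iff_trace_mul_right.2 fun X => by simpa [matrixTraceForm_apply] using hA X
  · exact fun A hA => ext_iff_trace_mul_left.2 fun X => by simpa [matrixTraceForm_apply] using hA X

end TraceForm

theorem stmt_1_general {F ι : Type*} [Field F] [Fintype ι] [DecidableEq ι]
    (hNRC : ¬ Function.Surjective fun x : F => x ^ 2) (s : Set (Matrix ι ι F))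
    (hs : ∀ A ∈ s, A.rank ≤ 1 ∧ A.trace = 0)
    (hsplits : ∀ A ∈ s, ∀ B ∈ s, ∀ t : F, (A + t • B).charpoly.Splits) :
    2 * Module.finrank F (Submodule.span F s) ≤ Fintype.card ι ^ 2 := by
  obtain ⟨c, hc⟩ : ∃ c : F, ¬ IsSquare c := by
    simpa [Function.Surjective, isSquare_iff_exists_sq, eq_comm] using hNRC
  have hortho : ∀ A ∈ s, ∀ B ∈ s, matrixTraceForm ι F A B = 0 := fun A hA B hB =>
    trace_mul_eq_zero_of_splits_charpoly hc (hs A hA).1 (hs B hB).1 (hs A hA).2 (hs B hB).2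
      (hsplits A hA B hB)
  calc 2 * Module.finrank F (Submodule.span F s)
      ≤ Module.finrank F (Matrix ι ι F) :=
        two_mul_finrank_le_of_le_orthogonal matrixTraceForm_nondegenerate
          (span_le_orthogonal_span hortho)
    _ = Fintype.card ι ^ 2 := by rw [Module.finrank_matrix, Module.finrank_self, mul_one, sq]

theorem stmt_1 {F : Type*} [Field F]
    (hNRC : ¬ Function.Surjective fun x : F => x ^ 2)
    {n : ℕ}
    (M : Submodule F (Matrix (Fin n) (Fin n) F))
    (hM : ∀ A ∈ M, A.Triangularizable)
    (s : Set (Matrix (Fin n) (Fin n) F))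
    (hs : ∀ A ∈ s, A.rank ≤ 1 ∧ A.trace = 0)
    (hspan : M = Submodule.span F s) :
    2 * Module.finrank F M ≤ n ^ 2 := by
  subst hspan
  simpa using stmt_1_general hNRC s hs fun A hA B hB t =>
    charpoly_splits_of_triangularizable <|
      hM _ (add_mem (Submodule.subset_span hA) (Submodule.smul_mem _ t (Submodule.subset_span hB)))
end

section
/- Let F be a field and M ∈ Mat_n(F) a regular Hessenberg matrix, i.e., m_{i,j} = 0 whenever i > j+1 and m_{j+1,j} ≠ 0 for all j ∈ {1,…,n−1}. Let r(t) ∈ F[t] be a monic polynomial of degree n whose coefficient of t^{n−1} equals −tr(M). Then there exists a row matrix R ∈ Mat_{1,n−1}(F) such that the matrix obtained from M by adding R to the entries (1,2),…,(1,n) of the first row has characteristic polynomial r(t). -/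
/-!
Write `q j` for the entry `(j, 0)` of the adjugate of `t - M`. Adding `v` to the first row of `M`
subtracts `∑ j, v j • q j` from the characteristic polynomial, so it suffices that every polynomial
of degree less than the size of `M` is a combination of the `q j`. The last `q j` is a minor of
triangular shape, equal to the product of the subdiagonal entries, hence a unit constant. The
identity `(t - M) * adjugate (t - M) = charpoly M`, read off row `i ≠ 0`, expresses `t * q i`
through the `q j` with `j ≥ i - 1`; therefore the span of the `q j` contains `1, t, t ^ 2, …`, one
more power for each step towards `q 0`. Finally, the trace condition forces `v 0 = 0`.
-/

open Polynomial Matrix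

section RowPerturbation

variable {ι A : Type*} [DecidableEq ι]

lemma add_of_ite_eq_updateRow [AddZeroClass A] (M : Matrix ι ι A) (i : ι) (v : ι → A) :
    M + Matrix.of (fun k j => if k = i then v j else 0) = M.updateRow i (M i + v) := by
  ext k j
  by_cases hk : k = i
  · simp [hk]
  · simp [hk]

variable [Fintype ι]

lemma trace_updateRow_add [AddCommMonoid A] (M : Matrix ι ι A) (i : ι) (v : ι → A) :
    (M.updateRow i (M i + v)).trace = M.trace + v i := by
  rw [← add_of_ite_eq_updateRow, trace_add]
  simp [trace]

variable [CommRing A]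

lemma det_updateRow_eq_sum_mul_adjugate (M : Matrix ι ι A) (i : ι) (v : ι → A) :
    (M.updateRow i v).det = ∑ j, v j * M.adjugate j i := by
  rw [← cramer_transpose_apply, cramer_eq_adjugate_mulVec, ← adjugate_transpose]
  exact dotProduct_comm _ _

lemma charmatrix_updateRow_add (M : Matrix ι ι A) (i : ι) (v : ι → A) :
    (M.updateRow i (M i + v)).charmatrix =
      M.charmatrix.updateRow i (M.charmatrix i - fun j => C (v j)) := by
  ext1 k j
  by_cases hk : k = i
  · subst hk
    simp [charmatrix_apply, sub_sub]
  · simp [charmatrix_apply, updateRow_ne hk]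

lemma charpoly_updateRow_add (M : Matrix ι ι A) (i : ι) (v : ι → A) :
    (M.updateRow i (M i + v)).charpoly =
      M.charpoly - ∑ j, v j • M.charmatrix.adjugate j i := by
  simp only [Matrix.charpoly, charmatrix_updateRow_add, det_updateRow_eq_sum_mul_adjugate,
    Pi.sub_apply, sub_mul, Finset.sum_sub_distrib, ← det_eq_sum_mul_adjugate_row, smul_eq_C_mul]

lemma X_mul_adjugate_charmatrix (M : Matrix ι ι A) {i k : ι} (hik : i ≠ k) :
    X * M.charmatrix.adjugate i k = ∑ j, M i j • M.charmatrix.adjugate j k := by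
  have hrow : ∑ j, M.charmatrix i j * M.charmatrix.adjugate j k = 0 := by
    rw [← Matrix.mul_apply, mul_adjugate, Matrix.smul_apply, one_apply_ne hik, smul_zero]
  simpa [charmatrix_apply, diagonal_apply, sub_mul, Finset.sum_sub_distrib, sub_eq_zero,
    smul_eq_C_mul] using hrow

end RowPerturbation

lemma degreeLT_le_span_range_of_X_mul_mem {A : Type*} [CommSemiring A] {n : ℕ}
    {q : Fin (n + 1) → A[X]} {u : A} (hu : IsUnit u) (hlast : q (Fin.last n) = C u)
    (hstep : ∀ i : Fin n, X * q i.succ ∈ Submodule.span A (q '' Set.Ici i.castSucc)) :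
    degreeLT A (n + 1) ≤ Submodule.span A (Set.range q) := by
  classical
  have X_pow_mem (i : Fin (n + 1)) :
      X ^ (i.rev : ℕ) ∈ Submodule.span A (q '' Set.Ici i) := by
    induction i using Fin.reverseInduction with
    | last =>
      have hq : q (Fin.last n) ∈ Submodule.span A (q '' Set.Ici (Fin.last n)) :=
        Submodule.subset_span ⟨_, Set.self_mem_Ici, rfl⟩
      rw [hlast, ← mul_one (C u), ← smul_eq_C_mul] at hq
      simpa using (Submodule.smul_mem_iff_of_isUnit _ hu).1 hq
    | cast i ih =>
      have X_mul_mem : Submodule.span A (q '' Set.Ici i.succ) ≤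
          (Submodule.span A (q '' Set.Ici i.castSucc)).comap (LinearMap.mulLeft A X) := by
        rw [Submodule.span_le]
        rintro _ ⟨j, hij, rfl⟩
        obtain ⟨j, rfl⟩ := Fin.exists_succ_eq.2 (Fin.ne_zero_of_lt ((Fin.succ_pos i).trans_le hij))
        exact Submodule.span_mono (Set.image_mono (Set.Ici_subset_Ici.2
          (Fin.castSucc_le_castSucc_iff.2 (Fin.succ_le_succ_iff.1 hij)))) (hstep j)
      simpa [Fin.rev_castSucc, Fin.rev_succ, pow_succ'] using X_mul_mem ih
  rw [degreeLT_eq_span_X_pow, Submodule.span_le]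
  simp only [Finset.coe_image, Finset.coe_range, Set.image_subset_iff]
  intro k hk
  simpa using Submodule.span_mono (Set.image_subset_range _ _) (X_pow_mem (Fin.rev ⟨k, hk⟩))

/-- A square matrix is upper Hessenberg if its entries strictly below the first subdiagonal
vanish. -/
def IsUpperHessenberg {A : Type*} [Zero A] {n : ℕ} (M : Matrix (Fin n) (Fin n) A) : Prop :=
  ∀ i j : Fin n, (j : ℕ) + 1 < (i : ℕ) → M i j = 0

namespace IsUpperHessenberg

variable {A : Type*} [CommRing A] {n : ℕ} {M : Matrix (Fin (n + 1)) (Fin (n + 1)) A}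

lemma adjugate_charmatrix_last_zero (hM : IsUpperHessenberg M) :
    M.charmatrix.adjugate (Fin.last n) 0 = C (∏ i : Fin n, M i.succ i.castSucc) := by
  have minor_apply (i j : Fin n) (hij : j ≤ i) :
      M.charmatrix.submatrix Fin.succ Fin.castSucc i j = -C (M i.succ j.castSucc) :=
    charmatrix_apply_ne _ _ _ (Fin.castSucc_lt_succ_iff.2 hij).ne'
  have minor_triangular : (M.charmatrix.submatrix Fin.succ Fin.castSucc).IsUpperTriangular := by
    intro i j hji
    rw [minor_apply i j (le_of_lt hji), hM _ _ (by simpa using hji), C_0, neg_zero]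
  rw [adjugate_fin_succ_eq_det_submatrix, Fin.succAbove_zero, Fin.succAbove_last,
    det_of_isUpperTriangular minor_triangular,
    Finset.prod_congr rfl fun i _ => minor_apply i i le_rfl, Finset.prod_neg]
  simp [← mul_assoc, ← mul_pow]

lemma X_mul_adjugate_charmatrix_succ_mem_span (hM : IsUpperHessenberg M) (i : Fin n) :
    X * M.charmatrix.adjugate i.succ 0 ∈
      Submodule.span A ((fun j => M.charmatrix.adjugate j 0) '' Set.Ici i.castSucc) := by
  rw [X_mul_adjugate_charmatrix M (Fin.succ_ne_zero i)]
  refine Submodule.sum_mem _ fun j _ => ?_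
  rcases lt_or_ge j i.castSucc with hji | hij
  · rw [hM i.succ j (by simpa [Fin.lt_def] using hji), zero_smul]
    exact Submodule.zero_mem _
  · exact Submodule.smul_mem _ _ (Submodule.subset_span ⟨j, hij, rfl⟩)

lemma degreeLT_le_span_adjugate_charmatrix (hM : IsUpperHessenberg M)
    (hsub : ∀ i : Fin n, IsUnit (M i.succ i.castSucc)) :
    degreeLT A (n + 1) ≤ Submodule.span A (Set.range fun j => M.charmatrix.adjugate j 0) :=
  degreeLT_le_span_range_of_X_mul_mem (IsUnit.prod_univ_iff.2 hsub)
    hM.adjugate_charmatrix_last_zero hM.X_mul_adjugate_charmatrix_succ_mem_span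

lemma exists_charpoly_updateRow_zero_eq (hM : IsUpperHessenberg M)
    (hsub : ∀ i : Fin n, IsUnit (M i.succ i.castSucc)) {r : A[X]} (hmonic : r.Monic)
    (hdeg : r.natDegree = n + 1) :
    ∃ v : Fin (n + 1) → A, (M.updateRow 0 (M 0 + v)).charpoly = r := by
  nontriviality A
  have hMdeg : M.charpoly.degree = (n + 1 : ℕ) := by simp [charpoly_degree_eq_dim]
  have hrdeg : r.degree = (n + 1 : ℕ) := by rw [degree_eq_natDegree hmonic.ne_zero, hdeg]
  have hdiff : M.charpoly - r ∈ degreeLT A (n + 1) := by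
    rw [mem_degreeLT, ← hMdeg]
    exact degree_sub_lt_left (hMdeg.trans hrdeg.symm) M.charpoly_monic.ne_zero
      (M.charpoly_monic.leadingCoeff.trans hmonic.leadingCoeff.symm)
  obtain ⟨v, hv⟩ := (Submodule.mem_span_range_iff_exists_fun A).1
    (hM.degreeLT_le_span_adjugate_charmatrix hsub hdiff)
  exact ⟨v, by rw [charpoly_updateRow_add, hv, sub_sub_cancel]⟩

end IsUpperHessenberg

theorem stmt_4_general {A : Type*} [CommRing A] {n : ℕ} (hn : 0 < n)
    (M : Matrix (Fin n) (Fin n) A) (hHess : IsUpperHessenberg M)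
    (hreg : ∀ i j : Fin n, (i : ℕ) = (j : ℕ) + 1 → IsUnit (M i j))
    (r : A[X]) (hmonic : r.Monic) (hdeg : r.natDegree = n)
    (htr : r.coeff (n - 1) = - M.trace) :
    ∃ R : Fin n → A, R ⟨0, hn⟩ = 0 ∧
      (M + Matrix.of fun i j : Fin n =>
        if i = ⟨0, hn⟩ then R j else 0).charpoly = r := by
  obtain ⟨m, rfl⟩ := Nat.exists_eq_add_one.2 hn
  obtain ⟨R, hR⟩ := hHess.exists_charpoly_updateRow_zero_eq
    (fun i => hreg i.succ i.castSucc (by simp)) hmonic hdeg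
  refine ⟨R, ?_, by rw [add_of_ite_eq_updateRow]; exact hR⟩
  have htrace : M.trace + R 0 = M.trace := by
    rw [← trace_updateRow_add, trace_eq_neg_charpoly_coeff, hR, Fintype.card_fin, htr, neg_neg]
  exact add_eq_left.1 htrace

theorem stmt_4 {F : Type*} [Field F] {n : ℕ} (hn : 0 < n)
    (M : Matrix (Fin n) (Fin n) F)
    (hHess : ∀ i j : Fin n, (j : ℕ) + 1 < (i : ℕ) → M i j = 0)
    (hreg : ∀ i j : Fin n, (i : ℕ) = (j : ℕ) + 1 → M i j ≠ 0)
    (r : Polynomial F) (hmonic : r.Monic) (hdeg : r.natDegree = n)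
    (htr : r.coeff (n - 1) = - M.trace) :
    ∃ R : Fin n → F, R ⟨0, hn⟩ = 0 ∧
      (M + Matrix.of fun i j : Fin n =>
        if i = ⟨0, hn⟩ then R j else 0).charpoly = r :=
  stmt_4_general hn M hHess (fun i j hij => (hreg i j hij).isUnit) r hmonic hdeg htr
end

section
/- Let F be a field which is NRC (the squaring map on F is not surjective) and not a finite field of characteristic 2, and let n ≥ 1. Then every linear subspace S of Mat_n(F) in which every matrix is triangularizable over F satisfies dim S ≤ n(n+1)/2. Since the upper triangular matrices form such a space of dimension n(n+1)/2, the maximum t_n(F) equals n(n+1)/2. -/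
/-!
Let `S` be a space of operators on `V` whose minimal polynomials split, and call `x ≠ 0` adapted
to `S` when no nonzero operator in `S` kills `x` and has its range in `F x`. If `x` is adapted,
evaluation at `x` costs at most `dim V` dimensions, and the operators of `S` that kill `x` act
faithfully on `V ⧸ F x`, so `dim S ≤ dim V + (dim V - 1) + ⋯ + 1` by induction.

If no vector were adapted, each `x ≠ 0` would have a witness `f x ∈ S`, and one can find `x` and `y`
with `f x y = α • x`, `f y x = β • y` and `α, β ≠ 0`: over an infinite field because finitely many
proper subspaces do not cover `V`, over a finite field by counting pairs. For every scalar `a`, the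
square of `(a / (α * β)) • f x + f y ∈ S` maps `x` to `a • x`; its minimal polynomial splits, so
`a` is a square.
-/

namespace TriangularizableSpaces

open Module Polynomial

section Avoidance

lemma exists_rel_and_rel_of_card_lt_two_mul {α : Type*} {s : Finset α} (hs : s.Nonempty)
    (r : α → α → Prop) [DecidableRel r] (hr : ∀ x ∈ s, s.card < 2 * {y ∈ s | r x y}.card) :
    ∃ x ∈ s, ∃ y ∈ s, r x y ∧ r y x := by
  classical
  let A : Finset (α × α) := {p ∈ s ×ˢ s | r p.1 p.2}
  let B : Finset (α × α) := {p ∈ s ×ˢ s | r p.2 p.1}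
  have card_B : B.card = A.card :=
    Finset.card_equiv (Equiv.prodComm α α) (by simp [A, B, and_comm])
  have card_A : A.card = ∑ x ∈ s, {y ∈ s | r x y}.card := by
    simp only [A, Finset.card_filter, Finset.sum_product]
  have card_lt : (s ×ˢ s).card < A.card + B.card := by
    calc (s ×ˢ s).card = ∑ _x ∈ s, s.card := by simp
      _ < ∑ x ∈ s, 2 * {y ∈ s | r x y}.card := Finset.sum_lt_sum_of_nonempty hs hr
      _ = A.card + B.card := by rw [← Finset.mul_sum, card_B, card_A, two_mul]
  obtain ⟨⟨x, y⟩, hxy⟩ := Finset.inter_nonempty_of_card_lt_card_add_card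
    (Finset.filter_subset _ _) (Finset.filter_subset _ _) card_lt
  simp only [Finset.mem_inter, Finset.mem_filter, Finset.mem_product] at hxy
  exact ⟨x, hxy.1.1.1, y, hxy.1.1.2, hxy.1.2, hxy.2.2⟩

lemma two_mul_card_le_of_ne_top {G : Type*} [AddGroup G] [Finite G] {H : AddSubgroup G}
    (hH : H ≠ ⊤) : 2 * Nat.card H ≤ Nat.card G := by
  rw [← H.index_mul_card]
  exact Nat.mul_le_mul_right _ (AddSubgroup.one_lt_index_of_ne_top hH)

lemma exists_notMem_notMem_of_finite {G : Type*} [AddGroup G] [Finite G] [Nontrivial G]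
    (K : G → AddSubgroup G) (hK : ∀ x ≠ 0, K x ≠ ⊤) : ∃ x y, y ∉ K x ∧ x ∉ K y := by
  classical
  have := Fintype.ofFinite G
  obtain ⟨z, hz⟩ := exists_ne (0 : G)
  suffices half_lt : ∀ x ∈ Finset.univ.erase (0 : G), (Finset.univ.erase (0 : G)).card <
      2 * {y ∈ Finset.univ.erase (0 : G) | y ∉ K x}.card by
    obtain ⟨x, -, y, -, hxy⟩ := exists_rel_and_rel_of_card_lt_two_mul ⟨z, by simp [hz]⟩
      (fun x y => y ∉ K x) half_lt
    exact ⟨x, y, hxy⟩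
  intro x hx
  have filter_eq : {y ∈ Finset.univ.erase (0 : G) | y ∉ K x} = ({y | y ∈ K x} : Finset G)ᶜ := by
    ext y
    simpa using fun hy h0 => hy (h0 ▸ zero_mem (K x))
  have card_K : 2 * ({y | y ∈ K x} : Finset G).card ≤ Fintype.card G := by
    simpa [Nat.card_eq_fintype_card, Fintype.card_subtype] using
      two_mul_card_le_of_ne_top (hK x (Finset.ne_of_mem_erase hx))
  have card_pos : 0 < Fintype.card G := Fintype.card_pos
  rw [filter_eq, Finset.card_compl, Finset.card_erase_of_mem (Finset.mem_univ _), Finset.card_univ]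
  omega

variable {F V : Type*} [Field F] [AddCommGroup V] [Module F V] [FiniteDimensional F V]
  [Nontrivial V]

lemma exists_notMem_notMem_of_infinite [Infinite F] (K : V → Submodule F V)
    (hK : ∀ x ≠ 0, K x ≠ ⊤) : ∃ x y, y ∉ K x ∧ x ∉ K y := by
  let b := finBasis F V
  obtain ⟨y, hy⟩ : ∃ y, ∀ i, y ∉ K (b i) := by
    by_contra! hcover
    obtain ⟨i, hi⟩ := Subspace.exists_eq_top_of_iUnion_eq_univ (p := fun i => K (b i))
      (Set.eq_univ_of_forall fun y => Set.mem_iUnion.2 (hcover y))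
    exact hK _ (b.ne_zero i) hi
  have hy0 : y ≠ 0 := fun h => hy (Classical.choice b.index_nonempty) (h ▸ zero_mem _)
  obtain ⟨i, hi⟩ : ∃ i, b i ∉ K y := by
    by_contra! hmem
    refine hK y hy0 (top_le_iff.1 (b.span_eq ▸ Submodule.span_le.2 ?_))
    exact Set.range_subset_iff.2 hmem
  exact ⟨b i, y, hy i, hi⟩

lemma exists_notMem_notMem (K : V → Submodule F V) (hK : ∀ x ≠ 0, K x ≠ ⊤) :
    ∃ x y, y ∉ K x ∧ x ∉ K y := by
  rcases finite_or_infinite F with _ | _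
  · have : Finite V := Module.finite_of_finite F
    exact exists_notMem_notMem_of_finite (fun x => (K x).toAddSubgroup)
      fun x hx h => hK x hx (Submodule.toAddSubgroup_injective h)
  · exact exists_notMem_notMem_of_infinite K hK

end Avoidance

section SplitMinpoly

lemma aeval_comp_of_comp_eq {R M N : Type*} [CommSemiring R] [AddCommMonoid M] [Module R M]
    [AddCommMonoid N] [Module R N] {f : End R M} {g : End R N} {π : M →ₗ[R] N}
    (h : g ∘ₗ π = π ∘ₗ f) (p : R[X]) : aeval g p ∘ₗ π = π ∘ₗ aeval f p := by
  have pow_apply (k : ℕ) (v : M) : (g ^ k) (π v) = π ((f ^ k) v) :=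
    LinearMap.congr_fun (End.commute_pow_left_of_commute h k) v
  ext v
  simp [aeval_eq_sum_range, pow_apply]

variable {F V W : Type*} [Field F] [AddCommGroup V] [Module F V] [AddCommGroup W] [Module F W]

lemma minpoly_dvd_of_surjective {f : End F V} {g : End F W} {π : V →ₗ[F] W}
    (hπ : Function.Surjective π) (h : g ∘ₗ π = π ∘ₗ f) : minpoly F g ∣ minpoly F f := by
  refine minpoly.dvd F g ?_
  rw [← LinearMap.cancel_right hπ, aeval_comp_of_comp_eq h, minpoly.aeval, LinearMap.comp_zero,
    LinearMap.zero_comp]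

lemma exists_isRoot_of_aeval_apply_eq_zero {f : End F V} (hf : IsIntegral F f)
    (hs : (minpoly F f).Splits) {q : F[X]} {x : V} (hx : x ≠ 0) (hq : aeval f q x = 0) :
    ∃ r, q.IsRoot r := by
  classical
  have not_coprime : ¬ IsCoprime (minpoly F f) q := by
    rintro ⟨u, v, huv⟩
    apply hx
    simpa [hq] using (congrArg (fun p => aeval f p x) huv).symm
  have gcd_splits : (EuclideanDomain.gcd (minpoly F f) q).Splits :=
    hs.of_dvd (minpoly.ne_zero hf) (EuclideanDomain.gcd_dvd_left _ _)
  obtain ⟨r, hr⟩ := gcd_splits.exists_eval_eq_zero fun h =>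
    not_coprime (EuclideanDomain.gcd_isUnit_iff.1 (isUnit_iff_degree_eq_zero.2 h))
  exact ⟨r, IsRoot.dvd hr (EuclideanDomain.gcd_dvd_right _ _)⟩

lemma isSquare_of_apply_apply_eq_smul {f : End F V} (hf : IsIntegral F f)
    (hs : (minpoly F f).Splits) {a : F} {x : V} (hx : x ≠ 0) (h : f (f x) = a • x) :
    IsSquare a := by
  obtain ⟨r, hr⟩ := exists_isRoot_of_aeval_apply_eq_zero hf hs (q := X ^ 2 - C a) hx
    (by simp [pow_two, h])
  exact ⟨r, by simpa [pow_two, sub_eq_zero, eq_comm] using hr⟩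

end SplitMinpoly

section Adapted

variable {F V : Type*} [Field F] [AddCommGroup V] [Module F V]

/-- A vector `x ≠ 0` is adapted to a space `S` of operators when `S` contains no nonzero trace-zero
operator with range `F x`. For an operator with range in `F x`, having trace zero amounts to
killing `x`, and the condition is stated in that form. -/
def IsAdapted (S : Submodule F (End F V)) (x : V) : Prop :=
  x ≠ 0 ∧ ∀ f ∈ S, f x = 0 → LinearMap.range f ≤ F ∙ x → f = 0

/-- The operators of `S` that kill `x`. -/
def vanishingAt (S : Submodule F (End F V)) (x : V) : Submodule F (End F V) :=
  S ⊓ LinearMap.ker (LinearMap.applyₗ x)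

lemma vanishingAt_le_compatibleMaps (S : Submodule F (End F V)) (x : V) :
    vanishingAt S x ≤ Submodule.compatibleMaps (F ∙ x) (F ∙ x) := by
  rintro f ⟨-, hfx : f x = 0⟩
  refine (Submodule.span_singleton_le_iff_mem _ _).2 ?_
  simp [hfx]

/-- The action on the quotient `V ⧸ F x` of the operators of `S` that kill `x`; it carries the
induction on the dimension of `V`. -/
def quotientAction (S : Submodule F (End F V)) (x : V) :
    vanishingAt S x →ₗ[F] End F (V ⧸ F ∙ x) :=
  Submodule.mapQLinear (F ∙ x) (F ∙ x) ∘ₗ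
    Submodule.inclusion (vanishingAt_le_compatibleMaps S x)

lemma quotientAction_comp_mkQ {S : Submodule F (End F V)} {x : V} (f : vanishingAt S x) :
    quotientAction S x f ∘ₗ (F ∙ x).mkQ = (F ∙ x).mkQ ∘ₗ (f : End F V) :=
  rfl

lemma IsAdapted.quotientAction_injective {S : Submodule F (End F V)} {x : V}
    (hx : IsAdapted S x) : Function.Injective (quotientAction S x) := by
  rw [injective_iff_map_eq_zero]
  rintro f hf
  refine Subtype.ext (hx.2 f f.2.1 f.2.2 ?_)
  rw [← Submodule.ker_mkQ (F ∙ x), LinearMap.range_le_ker_iff, ← quotientAction_comp_mkQ, hf,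
    LinearMap.zero_comp]

variable [FiniteDimensional F V]

lemma finrank_le_finrank_add_finrank_vanishingAt (S : Submodule F (End F V)) (x : V) :
    finrank F S ≤ finrank F V + finrank F (vanishingAt S x) := by
  let ev : S →ₗ[F] V := (LinearMap.applyₗ x).domRestrict S
  have map_ker : (LinearMap.ker ev).map S.subtype = vanishingAt S x := by
    rw [LinearMap.ker_domRestrict, Submodule.map_comap_subtype, vanishingAt]
  rw [← ev.finrank_range_add_finrank_ker, ← map_ker, Submodule.finrank_map_subtype_eq]
  exact Nat.add_le_add_right (Submodule.finrank_le _) _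

lemma exists_isAdapted [Nontrivial V] {a : F} (ha : ¬ IsSquare a) {S : Submodule F (End F V)}
    (hS : ∀ f ∈ S, (minpoly F f).Splits) : ∃ x, IsAdapted S x := by
  by_contra! hcon
  have exists_witness (x : V) (hx : x ≠ 0) :
      ∃ f ∈ S, f x = 0 ∧ LinearMap.range f ≤ F ∙ x ∧ f ≠ 0 := by
    simpa [IsAdapted, hx] using hcon x
  choose! f mem_S apply_self range_le ne_zero using exists_witness
  obtain ⟨x, y, hxy, hyx⟩ := exists_notMem_notMem (fun x => LinearMap.ker (f x))
    fun x hx h => ne_zero x hx (LinearMap.ker_eq_top.1 h)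
  have hx : x ≠ 0 := by rintro rfl; exact hyx (zero_mem _)
  have hy : y ≠ 0 := by rintro rfl; exact hxy (zero_mem _)
  obtain ⟨α, hα⟩ := Submodule.mem_span_singleton.1 (range_le x hx ⟨y, rfl⟩)
  obtain ⟨β, hβ⟩ := Submodule.mem_span_singleton.1 (range_le y hy ⟨x, rfl⟩)
  have hα0 : α ≠ 0 := by rintro rfl; exact hxy (by simpa using hα.symm)
  have hβ0 : β ≠ 0 := by rintro rfl; exact hyx (by simpa using hβ.symm)
  let g : End F V := (a / (α * β)) • f x + f y
  have g_mem : g ∈ S := S.add_mem (S.smul_mem _ (mem_S x hx)) (mem_S y hy)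
  have g_x : g x = β • y := by simp [g, apply_self x hx, hβ]
  have g_y : g y = (a / β) • x := by
    simp only [g, LinearMap.add_apply, LinearMap.smul_apply, ← hα, apply_self y hy, smul_smul,
      add_zero]
    congr 1
    field_simp
  refine ha (isSquare_of_apply_apply_eq_smul (Algebra.IsIntegral.isIntegral g) (hS g g_mem) hx ?_)
  rw [g_x, map_smul, g_y, smul_smul, mul_div_cancel₀ _ hβ0]

theorem finrank_le_choose_of_splits_minpoly {a : F} (ha : ¬ IsSquare a)
    (S : Submodule F (End F V)) (hS : ∀ f ∈ S, (minpoly F f).Splits) :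
    finrank F S ≤ (finrank F V + 1).choose 2 := by
  induction hd : finrank F V generalizing V with
  | zero =>
    have := finrank_zero_iff.1 hd
    simp [finrank_zero_of_subsingleton]
  | succ d ih =>
    have : Nontrivial V := nontrivial_of_finrank_eq_succ hd
    obtain ⟨x, hx⟩ := exists_isAdapted ha hS
    have finrank_quotient : finrank F (V ⧸ F ∙ x) = d := by
      have := (F ∙ x).finrank_quotient_add_finrank
      rw [finrank_span_singleton hx.1] at this
      omega
    have splits_quotient : ∀ g ∈ LinearMap.range (quotientAction S x), (minpoly F g).Splits := by
      rintro _ ⟨f, rfl⟩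
      exact (hS f f.2.1).of_dvd (minpoly.ne_zero (Algebra.IsIntegral.isIntegral _))
        (minpoly_dvd_of_surjective (F ∙ x).mkQ_surjective (quotientAction_comp_mkQ f))
    calc finrank F S ≤ (d + 1) + finrank F (vanishingAt S x) :=
          hd ▸ finrank_le_finrank_add_finrank_vanishingAt S x
      _ = (d + 1) + finrank F (LinearMap.range (quotientAction S x)) := by
          rw [LinearMap.finrank_range_of_inj hx.quotientAction_injective]
      _ ≤ (d + 1) + (d + 1).choose 2 :=
          Nat.add_le_add_left (ih _ splits_quotient finrank_quotient) _
      _ = (d + 1 + 1).choose 2 := by rw [Nat.choose_succ_succ' (d + 1) 1, Nat.choose_one_right]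

end Adapted

section UpperTriangular

/-- The space of upper triangular matrices. -/
def upperTriangular (ι R : Type*) [Semiring R] [LT ι] : Submodule R (Matrix ι ι R) where
  carrier := {M | M.IsUpperTriangular}
  add_mem' hM hN := hM.add hN
  zero_mem' := Matrix.blockTriangular_zero
  smul_mem' c M hM i j hij := by simp [hM hij]

variable (ι R : Type*) [Semiring R] [LinearOrder ι]

/-- The entries on and above the diagonal as coordinates on `upperTriangular ι R`. -/
def upperTriangularEquiv : upperTriangular ι R ≃ₗ[R] ({p : ι × ι // p.1 ≤ p.2} → R) where
  toFun M p := M.1 p.1.1 p.1.2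
  map_add' _ _ := rfl
  map_smul' _ _ := rfl
  invFun g := ⟨fun i j => if h : i ≤ j then g ⟨(i, j), h⟩ else 0,
    fun _ _ hij => dif_neg (not_le_of_gt hij)⟩
  left_inv M := by
    ext i j
    by_cases h : i ≤ j
    · simp [h]
    · simpa [h] using (M.2 (not_le.1 h)).symm
  right_inv g := by
    ext p
    simp [p.2]

lemma finrank_upperTriangular [StrongRankCondition R] [Fintype ι] :
    finrank R (upperTriangular ι R) = (Fintype.card ι + 1).choose 2 := by
  rw [(upperTriangularEquiv ι R).finrank_eq, finrank_fintype_fun_eq_card,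
    ← Fintype.card_congr Sym2.sortEquiv, Sym2.card]

end UpperTriangular

section Triangularizable

variable {F : Type*} [Field F] {n : ℕ}

lemma triangularizable_of_mem_upperTriangular {M : Matrix (Fin n) (Fin n) F}
    (hM : M ∈ upperTriangular (Fin n) F) : M.Triangularizable :=
  ⟨1, by simpa using (show M.IsUpperTriangular from hM)⟩

lemma splits_minpoly_of_triangularizable {M : Matrix (Fin n) (Fin n) F}
    (hM : M.Triangularizable) : (minpoly F M).Splits := by
  obtain ⟨P, hP⟩ := hM
  have charpoly_splits : M.charpoly.Splits := by
    rw [← Matrix.charpoly_units_conj P M, ← Matrix.coe_units_inv,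
      Matrix.charpoly_of_isUpperTriangular _ hP]
    exact Splits.prod fun i _ => Splits.X_sub_C _
  exact charpoly_splits.of_dvd M.charpoly_monic.ne_zero M.minpoly_dvd_charpoly

lemma finrank_le_choose_of_triangularizable {a : F} (ha : ¬ IsSquare a)
    (S : Submodule F (Matrix (Fin n) (Fin n) F)) (hS : ∀ M ∈ S, M.Triangularizable) :
    finrank F S ≤ (n + 1).choose 2 := by
  have splits : ∀ f ∈ S.map (Matrix.toLin' : _ ≃ₗ[F] _).toLinearMap, (minpoly F f).Splits := by
    rintro _ ⟨M, hM, rfl⟩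
    exact (Matrix.minpoly_toLin' M).symm ▸ splits_minpoly_of_triangularizable (hS M hM)
  simpa [LinearEquiv.finrank_map_eq] using finrank_le_choose_of_splits_minpoly ha _ splits

end Triangularizable

end TriangularizableSpaces

theorem stmt_19 {F : Type*} [Field F]
    (hNRC : ¬ Function.Surjective fun x : F => x ^ 2)
    (hfin2 : ¬ (Finite F ∧ ringChar F = 2))
    {n : ℕ} (hn : 1 ≤ n) :
    (∀ S : Submodule F (Matrix (Fin n) (Fin n) F),
      (∀ M ∈ S, M.Triangularizable) → Module.finrank F S ≤ n * (n + 1) / 2) ∧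
    (∃ S : Submodule F (Matrix (Fin n) (Fin n) F),
      (∀ M ∈ S, M.Triangularizable) ∧ Module.finrank F S = n * (n + 1) / 2) := by
  obtain ⟨a, ha⟩ : ∃ a : F, ¬ IsSquare a := by
    simpa [Function.Surjective, isSquare_iff_exists_sq, eq_comm] using hNRC
  have choose_eq : (n + 1).choose 2 = n * (n + 1) / 2 := by
    rw [Nat.choose_two_right, Nat.add_sub_cancel, mul_comm]
  rw [← choose_eq]
  refine ⟨TriangularizableSpaces.finrank_le_choose_of_triangularizable ha,
    TriangularizableSpaces.upperTriangular (Fin n) F,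
    fun _ => TriangularizableSpaces.triangularizable_of_mem_upperTriangular, ?_⟩
  rw [TriangularizableSpaces.finrank_upperTriangular, Fintype.card_fin]
end
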